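/- Let n, m ≥ 1, let f : ℂⁿ → ℂ^m be a continuous map, and let w₁, …, w_m be positive integers such that for all t ∈ ℂ, all v ∈ ℂⁿ, and all j, the j-th component satisfies f_j(t • v) = t^{w_j} · f_j(v). Suppose moreover that f(v) = 0 implies v = 0. Then f is a proper map, i.e., the preimage under f of every compact subset of ℂ^m is compact. -/

import Mathlib

/-!
A nonzero vector can be written `t • u` with `u` in a fixed compact shell around the origin, on
which `‖f‖` is bounded below by some `δ > 0`. As all weights are at least `1`, stretching by a
scalar `t` of norm at least `1` multiplies `‖f‖` by at least `‖t‖`. Hence `‖f v‖ ≥ δ * ‖v‖` away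
from the unit ball, so `f` tends to infinity at infinity.
-/

open Bornology Filter

theorem norm_mul_norm_le_norm_apply_smul_of_weightedHomogeneous
    {𝕜 E ι : Type*} {F : ι → Type*} [NormedField 𝕜] [SMul 𝕜 E] [Fintype ι]
    [∀ j, SeminormedAddCommGroup (F j)] [∀ j, NormedSpace 𝕜 (F j)]
    {f : E → ∀ j, F j} {w : ι → ℕ} (hw : ∀ j, 0 < w j)
    (hhom : ∀ (t : 𝕜) (v : E) (j : ι), f (t • v) j = t ^ w j • f v j)
    {t : 𝕜} (ht : 1 ≤ ‖t‖) (v : E) :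
    ‖t‖ * ‖f v‖ ≤ ‖f (t • v)‖ := by
  have ht₀ : 0 < ‖t‖ := zero_lt_one.trans_le ht
  rw [← le_div_iff₀' ht₀]
  refine (pi_norm_le_iff_of_nonneg (by positivity)).2 fun j ↦ ?_
  rw [le_div_iff₀' ht₀]
  calc
    ‖t‖ * ‖f v j‖ ≤ ‖t‖ ^ w j * ‖f v j‖ := by
      gcongr
      exact le_self_pow₀ ht (hw j).ne'
    _ = ‖f (t • v) j‖ := by rw [hhom, norm_smul, norm_pow]
    _ ≤ ‖f (t • v)‖ := norm_le_pi_norm _ j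

section Expanding

variable {E G : Type*} [NormedAddCommGroup E] [ProperSpace E] [NormedAddCommGroup G] {f : E → G}

theorem exists_pos_forall_le_norm_apply_of_mem_shell (hf : Continuous f)
    (hzero : ∀ v, f v = 0 → v = 0) {r : ℝ} (hr : 0 < r) (R : ℝ) :
    ∃ δ > 0, ∀ u, r ≤ ‖u‖ → ‖u‖ ≤ R → δ ≤ ‖f u‖ := by
  have hcompact : IsCompact {u : E | r ≤ ‖u‖ ∧ ‖u‖ ≤ R} := by
    refine (isCompact_closedBall (0 : E) R).of_isClosed_subset ?_ fun u hu ↦ by simpa using hu.2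
    exact (isClosed_le continuous_const continuous_norm).inter
      (isClosed_le continuous_norm continuous_const)
  obtain ⟨δ, hδ, hle⟩ := hcompact.exists_forall_le' hf.norm.continuousOn (a := 0)
    fun u hu ↦ norm_pos_iff.2 fun hfu ↦ norm_pos_iff.1 (hr.trans_le hu.1) (hzero u hfu)
  exact ⟨δ, hδ, fun u hru huR ↦ hle u ⟨hru, huR⟩⟩

variable {𝕜 : Type*} [NontriviallyNormedField 𝕜] [NormedSpace 𝕜 E]

theorem exists_pos_forall_mul_norm_le_norm_apply (hf : Continuous f)
    (hzero : ∀ v, f v = 0 → v = 0)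
    (hexp : ∀ (t : 𝕜) (v : E), 1 ≤ ‖t‖ → ‖t‖ * ‖f v‖ ≤ ‖f (t • v)‖) :
    ∃ δ > 0, ∀ v, 1 ≤ ‖v‖ → δ * ‖v‖ ≤ ‖f v‖ := by
  obtain ⟨c, hc⟩ := NormedField.exists_one_lt_norm 𝕜
  obtain ⟨δ, hδ, hshell⟩ :=
    exists_pos_forall_le_norm_apply_of_mem_shell hf hzero (r := 1 / ‖c‖) (by positivity) 1
  refine ⟨δ, hδ, fun v hv ↦ ?_⟩
  obtain ⟨d, hd, hlt, hle, -⟩ :=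
    rescale_to_shell hc one_pos (norm_pos_iff.1 (one_pos.trans_le hv))
  have hv_le : ‖v‖ ≤ ‖d⁻¹‖ := by
    rw [norm_inv, ← one_div, le_div_iff₀' (norm_pos_iff.2 hd), ← norm_smul]
    exact hlt.le
  calc
    δ * ‖v‖ ≤ ‖f (d • v)‖ * ‖d⁻¹‖ := by
      gcongr
      exact hshell _ hle hlt.le
    _ = ‖d⁻¹‖ * ‖f (d • v)‖ := mul_comm _ _
    _ ≤ ‖f (d⁻¹ • d • v)‖ := hexp _ _ (hv.trans hv_le)
    _ = ‖f v‖ := by rw [inv_smul_smul₀ hd]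

theorem isProperMap_of_norm_mul_norm_le_norm_apply_smul (hf : Continuous f)
    (hzero : ∀ v, f v = 0 → v = 0)
    (hexp : ∀ (t : 𝕜) (v : E), 1 ≤ ‖t‖ → ‖t‖ * ‖f v‖ ≤ ‖f (t • v)‖) :
    IsProperMap f := by
  obtain ⟨δ, hδ, hle⟩ := exists_pos_forall_mul_norm_le_norm_apply hf hzero hexp
  have hnorm : Tendsto (fun v ↦ ‖f v‖) (cobounded E) atTop :=
    tendsto_atTop_mono' _ ((eventually_cobounded_le_norm 1).mono hle)
      (tendsto_norm_cobounded_atTop.const_mul_atTop hδ)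
  refine isProperMap_iff_tendsto_cocompact.2 ⟨hf, ?_⟩
  rw [← Metric.cobounded_eq_cocompact]
  exact (tendsto_norm_atTop_iff_cobounded.1 hnorm).mono_right Metric.cobounded_le_cocompact

end Expanding

theorem stmt_5_general {𝕜 E ι : Type*} {F : ι → Type*} [NontriviallyNormedField 𝕜]
    [NormedAddCommGroup E] [NormedSpace 𝕜 E] [ProperSpace E] [Finite ι]
    [∀ j, NormedAddCommGroup (F j)] [∀ j, NormedSpace 𝕜 (F j)]
    {f : E → ∀ j, F j} (hf : Continuous f) {w : ι → ℕ} (hw : ∀ j, 0 < w j)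
    (hhom : ∀ (t : 𝕜) (v : E) (j : ι), f (t • v) j = t ^ w j • f v j)
    (hzero : ∀ v, f v = 0 → v = 0) :
    IsProperMap f := by
  have := Fintype.ofFinite ι
  exact isProperMap_of_norm_mul_norm_le_norm_apply_smul hf hzero fun _ v ht ↦
    norm_mul_norm_le_norm_apply_smul_of_weightedHomogeneous hw hhom ht v

/-- A continuous map that is weighted-homogeneous with positive weights and whose
only zero is the origin is proper: preimages of compact sets are compact. -/
theorem stmt_5 (n m : ℕ) (hn : 1 ≤ n) (hm : 1 ≤ m)
    (f : (Fin n → ℂ) → (Fin m → ℂ)) (hf : Continuous f)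
    (w : Fin m → ℕ) (hw : ∀ j, 0 < w j)
    (hhom : ∀ (t : ℂ) (v : Fin n → ℂ) (j : Fin m), f (t • v) j = t ^ (w j) * f v j)
    (hzero : ∀ v : Fin n → ℂ, f v = 0 → v = 0) :
    ∀ K : Set (Fin m → ℂ), IsCompact K → IsCompact (f ⁻¹' K) :=
  fun _ hK ↦ (stmt_5_general hf hw hhom hzero).isCompact_preimage hK
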